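/- arXiv:1701.01481 — 3 statements merged into one kernel-verified Lean document; each statement's English description precedes it below -/
import Mathlib

section
/- Let τ : ℝⁿ × [0,∞) → ℝ be bounded, compactly supported, and Lipschitz continuous with respect to the Euclidean distance, and let ψ : H → ℝ be smooth and compactly supported in H, normalized so that ∫_H ψ(q⁻¹) dV(q) = 1, i.e. ∫_{ℝⁿ×(0,∞)} ψ(−θ/ρ, 1/ρ) ρ^{−(n+1)} dθ dρ = 1. Then there exists a constant C (depending on τ and ψ) such that for all (θ,ρ) ∈ H, |τ(θ,ρ) − (τ*ψ)(θ,ρ)| ≤ Cρ; that is, τ − τ*ψ = O(ρ). -/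
open MeasureTheory

noncomputable section

/-- The open upper half-space `H = ℝⁿ × (0,∞)` inside `ℝⁿ × ℝ`. -/
def Hset (n : ℕ) : Set (EuclideanSpace ℝ (Fin n) × ℝ) := {p | 0 < p.2}

/-- Group multiplication on `H`: `(θ,ρ)·(θ',ρ') = (θ + ρθ', ρρ')`. -/
def hMul' {n : ℕ} (p q : EuclideanSpace ℝ (Fin n) × ℝ) : EuclideanSpace ℝ (Fin n) × ℝ :=
  (p.1 + p.2 • q.1, p.2 * q.2)

/-- Group inverse on `H`: `(θ,ρ)⁻¹ = (−θ/ρ, 1/ρ)`. -/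
def hInv' {n : ℕ} (p : EuclideanSpace ℝ (Fin n) × ℝ) : EuclideanSpace ℝ (Fin n) × ℝ :=
  (-(p.2⁻¹ • p.1), p.2⁻¹)

/-- The hyperbolic volume measure `dV(θ,ρ) = ρ^{−(n+1)} dθ dρ` on `H`. -/
def hypVol (n : ℕ) : Measure (EuclideanSpace ℝ (Fin n) × ℝ) :=
  (volume.restrict (Hset n)).withDensity fun p => ENNReal.ofReal ((p.2 ^ (n + 1))⁻¹)

/-- The group-theoretic convolution `(τ*ψ)(q) = ∫_H τ(p) ψ(p⁻¹·q) dV(p)`. -/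
def hConv {n : ℕ} (τ ψ : EuclideanSpace ℝ (Fin n) × ℝ → ℝ)
    (q : EuclideanSpace ℝ (Fin n) × ℝ) : ℝ :=
  ∫ p, τ p * ψ (hMul' (hInv' p) q) ∂(hypVol n)

/-!
The left translation `r ↦ q·r` is the dilation of ratio `ρ = q.2` followed by a horizontal
translation, and it takes the identity `(0, 1)` to `q`, so `dist q (q·r) = ρ * dist r (0, 1)`. It
also preserves the hyperbolic volume, which turns the convolution into
`(τ*ψ)(q) = ∫ τ(q·r) ψ(r⁻¹) dV(r)`. By the normalization of `ψ`,
`τ(q) - (τ*ψ)(q) = ∫ (τ(q) - τ(q·r)) ψ(r⁻¹) dV(r)`, and the Lipschitz condition bounds this by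
`Kρ ∫ dist r (0, 1) |ψ(r⁻¹)| dV(r)`.
-/

section HalfSpace

variable {n : ℕ}

lemma measurableSet_Hset (n : ℕ) : MeasurableSet (Hset n) :=
  measurableSet_lt measurable_const measurable_snd

lemma hMul'_eq_add_smul (q r : EuclideanSpace ℝ (Fin n) × ℝ) :
    hMul' q r = (q.1, 0) + q.2 • r := by
  ext <;> simp [hMul']

lemma hMul'_zero_one (q : EuclideanSpace ℝ (Fin n) × ℝ) : hMul' q (0, 1) = q := by
  simp [hMul']

lemma hMul'_mem_Hset {q r : EuclideanSpace ℝ (Fin n) × ℝ} (hq : q ∈ Hset n) (hr : r ∈ Hset n) :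
    hMul' q r ∈ Hset n :=
  mul_pos (show 0 < q.2 from hq) hr

lemma hInv'_hInv' {p : EuclideanSpace ℝ (Fin n) × ℝ} (hp : p.2 ≠ 0) : hInv' (hInv' p) = p := by
  ext <;> simp [hInv', hp]

lemma hMul'_hInv'_hMul' {q : EuclideanSpace ℝ (Fin n) × ℝ} (hq : q.2 ≠ 0)
    (r : EuclideanSpace ℝ (Fin n) × ℝ) : hMul' (hInv' (hMul' q r)) q = hInv' r := by
  ext <;> simp [hMul', hInv', hq, mul_assoc]

lemma dist_hMul'_left (q r s : EuclideanSpace ℝ (Fin n) × ℝ) :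
    dist (hMul' q r) (hMul' q s) = |q.2| * dist r s := by
  rw [hMul'_eq_add_smul, hMul'_eq_add_smul, dist_add_left, dist_smul₀, Real.norm_eq_abs]

lemma continuous_hMul'_left (q : EuclideanSpace ℝ (Fin n) × ℝ) : Continuous (hMul' q) := by
  unfold hMul'
  fun_prop

lemma continuousOn_hInv' : ContinuousOn (hInv' (n := n)) {p | p.2 ≠ 0} := by
  have hinv : ContinuousOn (fun p : EuclideanSpace ℝ (Fin n) × ℝ => p.2⁻¹) {p | p.2 ≠ 0} :=
    continuousOn_snd.inv₀ fun _ hp => hp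
  exact (hinv.smul continuousOn_fst).neg.prodMk hinv

lemma ae_mem_Hset (n : ℕ) : ∀ᵐ r ∂hypVol n, r ∈ Hset n :=
  (withDensity_absolutelyContinuous _ _).ae_le (ae_restrict_mem (measurableSet_Hset n))

section Integral

variable {F : Type*} [NormedAddCommGroup F] [NormedSpace ℝ F]

lemma integral_hypVol (f : EuclideanSpace ℝ (Fin n) × ℝ → F) :
    ∫ r, f r ∂hypVol n = ∫ r in Hset n, (r.2 ^ (n + 1))⁻¹ • f r := by
  rw [hypVol, integral_withDensity_eq_integral_toReal_smul (by fun_prop) (by simp)]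
  refine setIntegral_congr_fun (measurableSet_Hset n) fun r (hr : 0 < r.2) => ?_
  simp only [ENNReal.toReal_ofReal (inv_nonneg.2 (pow_pos hr (n + 1)).le)]

open scoped Pointwise in
lemma setIntegral_Hset_comp_hMul'_left (f : EuclideanSpace ℝ (Fin n) × ℝ → F)
    {q : EuclideanSpace ℝ (Fin n) × ℝ} (hq : q ∈ Hset n) :
    ∫ r in Hset n, f (hMul' q r) = (q.2 ^ (n + 1))⁻¹ • ∫ r in Hset n, f r := by
  have hρ : 0 < q.2 := hq
  have hHaar : (volume : Measure (EuclideanSpace ℝ (Fin n) × ℝ)).IsAddHaarMeasure :=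
    Measure.prod.instIsAddHaarMeasure volume volume
  have hdim : Module.finrank ℝ (EuclideanSpace ℝ (Fin n) × ℝ) = n + 1 := by simp
  have hdilate : q.2 • Hset n = Hset n := by
    ext r
    simp [Set.mem_smul_set_iff_inv_smul_mem₀ hρ.ne', Hset, hρ]
  have htranslate : (fun r => (q.1, 0) + r) ⁻¹' Hset n = Hset n := by
    ext r
    simp [Hset]
  calc ∫ r in Hset n, f (hMul' q r)
      = ∫ r in Hset n, f ((q.1, 0) + q.2 • r) := by simp only [hMul'_eq_add_smul]
    _ = (q.2 ^ (n + 1))⁻¹ • ∫ r in Hset n, f ((q.1, 0) + r) := by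
        rw [Measure.setIntegral_comp_smul_of_pos volume (fun r => f ((q.1, 0) + r)) _ hρ,
          hdim, hdilate]
    _ = (q.2 ^ (n + 1))⁻¹ • ∫ r in Hset n, f r := by
        rw [← (measurePreserving_add_left volume (q.1, (0 : ℝ))).setIntegral_preimage_emb
          (measurableEmbedding_addLeft _) f (Hset n), htranslate]

lemma integral_hypVol_comp_hMul'_left (f : EuclideanSpace ℝ (Fin n) × ℝ → F)
    {q : EuclideanSpace ℝ (Fin n) × ℝ} (hq : q ∈ Hset n) :
    ∫ r, f (hMul' q r) ∂hypVol n = ∫ r, f r ∂hypVol n := by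
  have hq' : q.2 ^ (n + 1) ≠ 0 := pow_ne_zero _ (ne_of_gt hq)
  have hdensity (r : EuclideanSpace ℝ (Fin n) × ℝ) :
      (r.2 ^ (n + 1))⁻¹ = q.2 ^ (n + 1) * ((hMul' q r).2 ^ (n + 1))⁻¹ := by
    rw [hMul', mul_pow, mul_inv, mul_inv_cancel_left₀ hq']
  calc ∫ r, f (hMul' q r) ∂hypVol n
      = ∫ r in Hset n, q.2 ^ (n + 1) • ((hMul' q r).2 ^ (n + 1))⁻¹ • f (hMul' q r) := by
        simp_rw [integral_hypVol, smul_smul, ← hdensity]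
    _ = ∫ r in Hset n, (r.2 ^ (n + 1))⁻¹ • f r := by
        rw [integral_smul, setIntegral_Hset_comp_hMul'_left (fun r => (r.2 ^ (n + 1))⁻¹ • f r) hq,
          smul_inv_smul₀ hq']
    _ = ∫ r, f r ∂hypVol n := (integral_hypVol f).symm

end Integral

section Convolution

variable {K : NNReal} {τ ψ : EuclideanSpace ℝ (Fin n) × ℝ → ℝ} {q : EuclideanSpace ℝ (Fin n) × ℝ}

lemma hConv_eq_integral_hMul'_mul_hInv' (τ ψ : EuclideanSpace ℝ (Fin n) × ℝ → ℝ)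
    (hq : q ∈ Hset n) : hConv τ ψ q = ∫ r, τ (hMul' q r) * ψ (hInv' r) ∂hypVol n := by
  rw [hConv, ← integral_hypVol_comp_hMul'_left _ hq]
  simp only [hMul'_hInv'_hMul' (ne_of_gt hq)]

lemma support_comp_hInv'_subset (hψH : tsupport ψ ⊆ Hset n) :
    Function.support (fun r => ψ (hInv' r)) ⊆ hInv' '' tsupport ψ := by
  intro r hr
  have hmem : hInv' r ∈ tsupport ψ := subset_tsupport ψ hr
  have hpos : 0 < r.2⁻¹ := hψH hmem
  exact ⟨hInv' r, hmem, hInv'_hInv' (inv_pos.1 hpos).ne'⟩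

lemma integrable_mul_comp_hInv' {g : EuclideanSpace ℝ (Fin n) × ℝ → ℝ} (hg : Continuous g)
    (hψsupp : HasCompactSupport ψ) (hψH : tsupport ψ ⊆ Hset n)
    (hψint : Integrable (fun r => ψ (hInv' r)) (hypVol n)) :
    Integrable (fun r => g r * ψ (hInv' r)) (hypVol n) := by
  have hcompact : IsCompact (hInv' '' tsupport ψ) :=
    hψsupp.isCompact.image_of_continuousOn
      (continuousOn_hInv'.mono fun _ hp => ne_of_gt (hψH hp))
  rw [← integrableOn_iff_integrable_of_support_subset
    ((Function.support_mul_subset_right g _).trans (support_comp_hInv'_subset hψH))]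
  exact hψint.integrableOn.continuousOn_mul hg.continuousOn hcompact

lemma abs_sub_hMul'_le (hτ : LipschitzOnWith K τ (Hset n)) (hq : q ∈ Hset n)
    {r : EuclideanSpace ℝ (Fin n) × ℝ} (hr : r ∈ Hset n) :
    |τ q - τ (hMul' q r)| ≤ K * q.2 * dist r (0, 1) := by
  have hq' : 0 < q.2 := hq
  calc |τ q - τ (hMul' q r)| ≤ K * dist (hMul' q (0, 1)) (hMul' q r) := by
        rw [hMul'_zero_one]
        exact hτ.dist_le_mul q hq _ (hMul'_mem_Hset hq hr)
    _ = K * q.2 * dist r (0, 1) := by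
        rw [dist_hMul'_left, abs_of_pos hq', dist_comm, mul_assoc]

lemma ae_norm_sub_hMul'_mul_le (hτ : LipschitzOnWith K τ (Hset n)) (hq : q ∈ Hset n)
    (ψ : EuclideanSpace ℝ (Fin n) × ℝ → ℝ) :
    ∀ᵐ r ∂hypVol n, ‖(τ q - τ (hMul' q r)) * ψ (hInv' r)‖
      ≤ K * q.2 * (dist r (0, 1) * |ψ (hInv' r)|) := by
  filter_upwards [ae_mem_Hset n] with r hr
  rw [norm_mul, Real.norm_eq_abs, Real.norm_eq_abs, ← mul_assoc]
  exact mul_le_mul_of_nonneg_right (abs_sub_hMul'_le hτ hq hr) (abs_nonneg _)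

lemma aestronglyMeasurable_comp_hMul'_left (hτ : ContinuousOn τ (Hset n)) (hq : q ∈ Hset n) :
    AEStronglyMeasurable (fun r => τ (hMul' q r)) (hypVol n) := by
  have hcont : ContinuousOn (fun r => τ (hMul' q r)) (Hset n) :=
    hτ.comp (continuous_hMul'_left q).continuousOn fun _ hr => hMul'_mem_Hset hq hr
  exact (hcont.aestronglyMeasurable (measurableSet_Hset n)).mono_ac
    (withDensity_absolutelyContinuous _ _)

lemma integrable_dist_mul_abs_comp_hInv'
    (hψmom : Integrable (fun r => dist r (0, 1) * ψ (hInv' r)) (hypVol n)) :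
    Integrable (fun r => dist r (0, 1) * |ψ (hInv' r)|) (hypVol n) := by
  simpa only [abs_mul, abs_of_nonneg dist_nonneg] using hψmom.abs

lemma integrable_sub_hMul'_mul (hτ : LipschitzOnWith K τ (Hset n)) (hq : q ∈ Hset n)
    (hψmeas : AEStronglyMeasurable (fun r => ψ (hInv' r)) (hypVol n))
    (hψmom : Integrable (fun r => dist r (0, 1) * ψ (hInv' r)) (hypVol n)) :
    Integrable (fun r => (τ q - τ (hMul' q r)) * ψ (hInv' r)) (hypVol n) :=
  ((integrable_dist_mul_abs_comp_hInv' hψmom).const_mul (K * q.2)).mono'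
    ((aestronglyMeasurable_const.sub
      (aestronglyMeasurable_comp_hMul'_left hτ.continuousOn hq)).mul hψmeas)
    (ae_norm_sub_hMul'_mul_le hτ hq ψ)

lemma sub_hConv_eq_integral (hτ : LipschitzOnWith K τ (Hset n)) (hq : q ∈ Hset n)
    (hψmom : Integrable (fun r => dist r (0, 1) * ψ (hInv' r)) (hypVol n))
    (hψnorm : ∫ r, ψ (hInv' r) ∂hypVol n = 1) :
    τ q - hConv τ ψ q = ∫ r, (τ q - τ (hMul' q r)) * ψ (hInv' r) ∂hypVol n := by
  have hψint : Integrable (fun r => ψ (hInv' r)) (hypVol n) :=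
    .of_integral_ne_zero (hψnorm ▸ one_ne_zero)
  have hdiff := integrable_sub_hMul'_mul hτ hq hψint.aestronglyMeasurable hψmom
  calc τ q - hConv τ ψ q
      = (∫ r, τ q * ψ (hInv' r) ∂hypVol n)
          - ∫ r, (τ q * ψ (hInv' r) - (τ q - τ (hMul' q r)) * ψ (hInv' r)) ∂hypVol n := by
        rw [integral_const_mul, hψnorm, mul_one, hConv_eq_integral_hMul'_mul_hInv' τ ψ hq]
        simp only [sub_mul, sub_sub_cancel]
    _ = ∫ r, (τ q - τ (hMul' q r)) * ψ (hInv' r) ∂hypVol n := by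
        rw [integral_sub (hψint.const_mul _) hdiff, sub_sub_cancel]

theorem stmt8_general (hτ : LipschitzOnWith K τ (Hset n))
    (hψmom : Integrable (fun r => dist r (0, 1) * ψ (hInv' r)) (hypVol n))
    (hψnorm : ∫ r, ψ (hInv' r) ∂hypVol n = 1) (hq : q ∈ Hset n) :
    |τ q - hConv τ ψ q| ≤ K * (∫ r, dist r (0, 1) * |ψ (hInv' r)| ∂hypVol n) * q.2 := by
  calc |τ q - hConv τ ψ q|
      = ‖∫ r, (τ q - τ (hMul' q r)) * ψ (hInv' r) ∂hypVol n‖ := by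
        rw [sub_hConv_eq_integral hτ hq hψmom hψnorm, Real.norm_eq_abs]
    _ ≤ ∫ r, K * q.2 * (dist r (0, 1) * |ψ (hInv' r)|) ∂hypVol n :=
        norm_integral_le_of_norm_le ((integrable_dist_mul_abs_comp_hInv' hψmom).const_mul _)
          (ae_norm_sub_hMul'_mul_le hτ hq ψ)
    _ = K * (∫ r, dist r (0, 1) * |ψ (hInv' r)| ∂hypVol n) * q.2 := by
        rw [integral_const_mul, mul_right_comm]

end Convolution

end HalfSpace

/-- If `τ` is bounded, compactly supported, and Lipschitz on `ℝⁿ × [0,∞)`, and `ψ` is smooth,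
compactly supported in `H`, and normalized so that `∫_H ψ(q⁻¹) dV(q) = 1`, then
`τ − τ*ψ = O(ρ)`: there is `C` with `|τ(θ,ρ) − (τ*ψ)(θ,ρ)| ≤ Cρ` on `H`. -/
theorem stmt8 (n : ℕ) (hn : 1 ≤ n)
    (τ : EuclideanSpace ℝ (Fin n) × ℝ → ℝ)
    (K : NNReal) (hτlip : LipschitzOnWith K τ {p | 0 ≤ p.2})
    (hτbdd : ∃ M : ℝ, ∀ p, |τ p| ≤ M) (hτsupp : HasCompactSupport τ)
    (ψ : EuclideanSpace ℝ (Fin n) × ℝ → ℝ)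
    (hψ : ContDiff ℝ (⊤ : ℕ∞) ψ) (hψsupp : HasCompactSupport ψ) (hψH : tsupport ψ ⊆ Hset n)
    (hψnorm : ∫ q, ψ (hInv' q) ∂(hypVol n) = 1) :
    ∃ C : ℝ, ∀ p ∈ Hset n, |τ p - hConv τ ψ p| ≤ C * p.2 := by
  refine ⟨_, fun p hp =>
    stmt8_general (hτlip.mono fun r (hr : 0 < r.2) => hr.le) ?_ hψnorm hp⟩
  exact integrable_mul_comp_hInv' (by fun_prop) hψsupp hψH
    (.of_integral_ne_zero (hψnorm ▸ one_ne_zero))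
end
end

section
/- Let n ≥ 1 and A, B ≥ 0. Let u : ℝⁿ × [0,1] → ℝ be C¹ with u(θ,0) = 0 for all θ ∈ ℝⁿ, and let w̃ : ℝⁿ × [0,1] → ℝ be differentiable with ‖Dw̃(z)‖ ≤ B for all z. Assume that |∂_ρ u(θ,t) − w̃(θ,t)| ≤ At for all (θ,t) ∈ ℝⁿ × [0,1], where ∂_ρ denotes the partial derivative in the last coordinate. Then for all (θ,ρ) ∈ ℝⁿ × [0,1]: |u(θ,ρ) − ρ w̃(θ,ρ)| ≤ ((A+B)/2) ρ², and |∂_ρ(u − ρw̃)(θ,ρ)| = |∂_ρ u(θ,ρ) − w̃(θ,ρ) − ρ ∂_ρ w̃(θ,ρ)| ≤ (A+B) ρ. -/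
noncomputable section

/-!
Along a vertical line `t ↦ (θ, t)`, the function `u - t • w` vanishes at `t = 0` and has derivative
`(∂ᵨu - w) - t • ∂ᵨw`. The first term is at most `A * t` and the second at most `B * t`, so this
derivative is at most `(A + B) * t`; integrating from `0` to `ρ` gains the factor `ρ / 2`.
-/

open Set

section OneVariable

variable {F : Type*} [NormedAddCommGroup F] [NormedSpace ℝ F]

theorem norm_image_sub_le_of_norm_deriv_le_linear {f f' : ℝ → F} {a b C : ℝ}
    (hf : ∀ x ∈ Icc a b, HasDerivWithinAt f (f' x) (Icc a b) x)
    (bound : ∀ x ∈ Ico a b, ‖f' x‖ ≤ C * (x - a)) :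
    ∀ x ∈ Icc a b, ‖f x - f a‖ ≤ C / 2 * (x - a) ^ 2 := by
  have hderiv_sub : ∀ x ∈ Icc a b, HasDerivWithinAt (fun x => f x - f a) (f' x) (Icc a b) x :=
    fun x hx => (hf x hx).sub_const (f a)
  have hderiv_sq : ∀ x, HasDerivAt (fun x => C / 2 * (x - a) ^ 2) (C * (x - a)) x := fun x =>
    ((((hasDerivAt_id' x).sub_const a).fun_pow 2).const_mul (C / 2)).congr_deriv (by ring)
  refine image_norm_le_of_norm_deriv_right_le_deriv_boundary
    (fun x hx => (hderiv_sub x hx).continuousWithinAt)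
    (fun x hx => ?_) (by simp) hderiv_sq bound
  exact (hderiv_sub x (Ico_subset_Icc_self hx)).mono_of_mem_nhdsWithin (Icc_mem_nhdsGE_of_mem hx)

theorem norm_sub_sub_smul_le {x y z : F} {A B t : ℝ} (ht : 0 ≤ t) (hxy : ‖x - y‖ ≤ A * t)
    (hz : ‖z‖ ≤ B) : ‖x - y - t • z‖ ≤ (A + B) * t :=
  calc ‖x - y - t • z‖ ≤ ‖x - y‖ + ‖t • z‖ := norm_sub_le _ _
    _ = ‖x - y‖ + t * ‖z‖ := by rw [norm_smul_of_nonneg ht]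
    _ ≤ A * t + t * B := by gcongr
    _ = (A + B) * t := by ring

theorem norm_sub_smul_le_of_norm_deriv_sub_le {f f' g g' : ℝ → F} {A B b : ℝ} (hf₀ : f 0 = 0)
    (hf : ∀ t ∈ Icc 0 b, HasDerivWithinAt f (f' t) (Icc 0 b) t)
    (hg : ∀ t ∈ Icc 0 b, HasDerivWithinAt g (g' t) (Icc 0 b) t)
    (hfg : ∀ t ∈ Ico 0 b, ‖f' t - g t‖ ≤ A * t) (hg' : ∀ t ∈ Ico 0 b, ‖g' t‖ ≤ B) :
    ∀ t ∈ Icc 0 b, ‖f t - t • g t‖ ≤ (A + B) / 2 * t ^ 2 := by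
  have hderiv : ∀ t ∈ Icc 0 b,
      HasDerivWithinAt (fun t => f t - t • g t) (f' t - g t - t • g' t) (Icc 0 b) t := fun t ht =>
    ((hf t ht).fun_sub ((hasDerivAt_id' t).hasDerivWithinAt.fun_smul (hg t ht))).congr_deriv
      (by module)
  have hbound : ∀ t ∈ Ico 0 b, ‖f' t - g t - t • g' t‖ ≤ (A + B) * (t - 0) := fun t ht => by
    simpa only [sub_zero] using norm_sub_sub_smul_le ht.1 (hfg t ht) (hg' t ht)
  simpa only [hf₀, zero_smul, sub_zero] using
    norm_image_sub_le_of_norm_deriv_le_linear hderiv hbound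

end OneVariable

open scoped Pointwise in
theorem hasLineDerivWithinAt_prodMk_zero_one_iff {𝕜 E F : Type*} [NontriviallyNormedField 𝕜]
    [AddCommGroup E] [Module 𝕜 E] [NormedAddCommGroup F] [NormedSpace 𝕜 F] {f : E × 𝕜 → F} {f' : F}
    {s : Set (E × 𝕜)} {x : E} {t : 𝕜} :
    HasLineDerivWithinAt 𝕜 f f' s (x, t) (0, 1) ↔
      HasDerivWithinAt (fun r => f (x, r)) f' (Prod.mk x ⁻¹' s) t := by
  have hline : t +ᵥ (fun r : 𝕜 => (x, t) + r • ((0, 1) : E × 𝕜)) ⁻¹' s = Prod.mk x ⁻¹' s := by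
    ext r
    simp [mem_vadd_set_iff_neg_vadd_mem]
  have hshift := hasFDerivWithinAt_comp_add_left (f := fun r => f (x, r))
    (f' := ContinuousLinearMap.toSpanSingleton 𝕜 f')
    (s := (fun r : 𝕜 => (x, t) + r • ((0, 1) : E × 𝕜)) ⁻¹' s) (x := 0) t
  rw [hline, add_zero] at hshift
  simpa [HasLineDerivWithinAt, hasDerivWithinAt_iff_hasFDerivWithinAt] using hshift

theorem stmt11_general {E F : Type*} [AddCommGroup E] [Module ℝ E] [NormedAddCommGroup F]
    [NormedSpace ℝ F] {A B : ℝ} {u w u' w' : E × ℝ → F} {S : Set (E × ℝ)}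
    (hS_nonneg : ∀ z ∈ S, 0 ≤ z.2) (hS_segment : ∀ z ∈ S, MapsTo (Prod.mk z.1) (Icc 0 z.2) S)
    (hu : ∀ z ∈ S, HasLineDerivWithinAt ℝ u (u' z) S z (0, 1))
    (hu₀ : ∀ θ, (θ, 0) ∈ S → u (θ, 0) = 0)
    (hw : ∀ z ∈ S, HasLineDerivWithinAt ℝ w (w' z) S z (0, 1))
    (hw' : ∀ z ∈ S, ‖w' z‖ ≤ B) (huw : ∀ z ∈ S, ‖u' z - w z‖ ≤ A * z.2) :
    ∀ z ∈ S,
      ‖u z - z.2 • w z‖ ≤ (A + B) / 2 * z.2 ^ 2 ∧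
      ‖u' z - w z - z.2 • w' z‖ ≤ (A + B) * z.2 := by
  rintro ⟨θ, ρ⟩ hz
  have hρ : 0 ≤ ρ := hS_nonneg _ hz
  have hseg : MapsTo (Prod.mk θ) (Icc 0 ρ) S := hS_segment _ hz
  have hderiv {f f' : E × ℝ → F} (hf : ∀ z ∈ S, HasLineDerivWithinAt ℝ f (f' z) S z (0, 1)) :
      ∀ t ∈ Icc 0 ρ, HasDerivWithinAt (fun t => f (θ, t)) (f' (θ, t)) (Icc 0 ρ) t := fun t ht =>
    (hasLineDerivWithinAt_prodMk_zero_one_iff.1 (hf _ (hseg ht))).mono hseg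
  refine ⟨?_, norm_sub_sub_smul_le hρ (huw _ hz) (hw' _ hz)⟩
  exact norm_sub_smul_le_of_norm_deriv_sub_le (hu₀ θ (hseg (left_mem_Icc.2 hρ)))
    (hderiv hu) (hderiv hw) (fun t ht => huw _ (hseg (Ico_subset_Icc_self ht)))
    (fun t ht => hw' _ (hseg (Ico_subset_Icc_self ht))) ρ (right_mem_Icc.2 hρ)

/-- Let `u : ℝⁿ × [0,1] → ℝ` be `C¹` (with derivative `Du`, continuous on
`S = ℝⁿ × [0,1]`) with `u(θ,0) = 0`, and let `w̃` be differentiable with total derivative `Dw`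
bounded by `B`. If the normal derivative `∂_ρ u(θ,t) = Du(θ,t)(0,1)` satisfies
`|∂_ρ u(θ,t) − w̃(θ,t)| ≤ At` on `S`, then on `S`:
`|u(θ,ρ) − ρ w̃(θ,ρ)| ≤ ((A+B)/2) ρ²` and
`|∂_ρ u(θ,ρ) − w̃(θ,ρ) − ρ ∂_ρ w̃(θ,ρ)| ≤ (A+B) ρ`. -/
theorem stmt11 (n : ℕ) (hn : 1 ≤ n) (A B : ℝ) (hA : 0 ≤ A) (hB : 0 ≤ B)
    (u wt : EuclideanSpace ℝ (Fin n) × ℝ → ℝ)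
    (Du Dw : EuclideanSpace ℝ (Fin n) × ℝ → (EuclideanSpace ℝ (Fin n) × ℝ) →L[ℝ] ℝ)
    (S : Set (EuclideanSpace ℝ (Fin n) × ℝ))
    (hS : S = {z | z.2 ∈ Set.Icc (0 : ℝ) 1})
    (hu : ∀ z ∈ S, HasFDerivWithinAt u (Du z) S z)
    (hDu_cont : ContinuousOn Du S)
    (hu0 : ∀ θ, u (θ, 0) = 0)
    (hw : ∀ z ∈ S, HasFDerivWithinAt wt (Dw z) S z)
    (hDw_bdd : ∀ z ∈ S, ‖Dw z‖ ≤ B)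
    (hnd : ∀ z ∈ S, |Du z (0, 1) - wt z| ≤ A * z.2) :
    ∀ z ∈ S,
      |u z - z.2 * wt z| ≤ ((A + B) / 2) * z.2 ^ 2 ∧
      |Du z (0, 1) - wt z - z.2 * Dw z (0, 1)| ≤ (A + B) * z.2 := by
  subst hS
  exact stmt11_general (S := {z | z.2 ∈ Icc 0 1}) (fun _ hz => hz.1)
    (fun _ hz _ ht => ⟨ht.1, ht.2.trans hz.2⟩)
    (fun z hz => (hu z hz).hasLineDerivWithinAt (0, 1)) (fun θ _ => hu0 θ)
    (fun z hz => (hw z hz).hasLineDerivWithinAt (0, 1))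
    (fun z hz => ((Dw z).unit_le_opNorm _ (by simp)).trans (hDw_bdd z hz)) hnd
end
end

section
/- Let n ≥ 3 and let f : ℝ → (0,∞) be a C³ function. On the open set {x ∈ ℝⁿ : x¹ > 0}, let k be the Riemannian metric with diagonal matrix k₁₁ = 1, k₂₂ = f(x¹)², k_{αα} = 1 for 3 ≤ α ≤ n, and k_{ij} = 0 for i ≠ j. Then the Weyl tensor of k satisfies W₁₂₂₁ = −((n−3)/(n−1)) f(x¹) f''(x¹) at every point with x¹ > 0. -/
noncomputable section

open scoped BigOperators

/-- Coordinate partial derivative `∂_i F` of a scalar function on `ℝᵐ`. -/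
def pd {m : ℕ} (i : Fin m) (F : (Fin m → ℝ) → ℝ) (x : Fin m → ℝ) : ℝ :=
  fderiv ℝ F x (Pi.single i 1)

/-- Christoffel symbols `Γ^k_{ij} = ½ Σ_l g^{kl}(∂_i g_{jl} + ∂_j g_{il} − ∂_l g_{ij})`. -/
def christoffel {m : ℕ} (g : (Fin m → ℝ) → Matrix (Fin m) (Fin m) ℝ)
    (k i j : Fin m) (x : Fin m → ℝ) : ℝ :=
  (1 / 2) * ∑ l, (g x)⁻¹ k l *
    (pd i (fun y => g y j l) x + pd j (fun y => g y i l) x - pd l (fun y => g y i j) x)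

/-- Riemann curvature tensor
`R_{ijkl} = Σ_m g_{lm}(∂_i Γ^m_{jk} − ∂_j Γ^m_{ik} + Σ_p (Γ^m_{ip} Γ^p_{jk} − Γ^m_{jp} Γ^p_{ik}))`. -/
def riemann {m : ℕ} (g : (Fin m → ℝ) → Matrix (Fin m) (Fin m) ℝ)
    (i j k l : Fin m) (x : Fin m → ℝ) : ℝ :=
  ∑ mm, g x l mm *
    (pd i (christoffel g mm j k) x - pd j (christoffel g mm i k) x
      + ∑ p, (christoffel g mm i p x * christoffel g p j k x
              - christoffel g mm j p x * christoffel g p i k x))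

/-- Ricci tensor `Rc_{jk} = Σ_{i,l} g^{il} R_{ijkl}`. -/
def ricci {m : ℕ} (g : (Fin m → ℝ) → Matrix (Fin m) (Fin m) ℝ)
    (j k : Fin m) (x : Fin m → ℝ) : ℝ :=
  ∑ i, ∑ l, (g x)⁻¹ i l * riemann g i j k l x

/-- Scalar curvature `S = Σ_{j,k} g^{jk} Rc_{jk}`. -/
def scalarCurv {m : ℕ} (g : (Fin m → ℝ) → Matrix (Fin m) (Fin m) ℝ)
    (x : Fin m → ℝ) : ℝ :=
  ∑ j, ∑ k, (g x)⁻¹ j k * ricci g j k x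

/-- Schouten tensor `P_{ij} = (1/(m−2))(Rc_{ij} − (S/(2(m−1))) g_{ij})`. -/
def schouten {m : ℕ} (g : (Fin m → ℝ) → Matrix (Fin m) (Fin m) ℝ)
    (i j : Fin m) (x : Fin m → ℝ) : ℝ :=
  (1 / ((m : ℝ) - 2)) * (ricci g i j x - scalarCurv g x / (2 * ((m : ℝ) - 1)) * g x i j)

/-- Weyl tensor `W_{ijkl} = R_{ijkl} − (P ∧○ g)_{ijkl}`, where `∧○` is the Kulkarni–Nomizu
product `(a ∧○ b)_{ijkl} = a_{il} b_{jk} + a_{jk} b_{il} − a_{ik} b_{jl} − a_{jl} b_{ik}`. -/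
def weyl {m : ℕ} (g : (Fin m → ℝ) → Matrix (Fin m) (Fin m) ℝ)
    (i j k l : Fin m) (x : Fin m → ℝ) : ℝ :=
  riemann g i j k l x -
    (schouten g i l x * g x j k + schouten g j k x * g x i l
      - schouten g i k x * g x j l - schouten g j l x * g x i k)

/-- Covariant derivative of the Schouten tensor:
`P_{ij,k} = ∂_k P_{ij} − Σ_l Γ^l_{ki} P_{lj} − Σ_l Γ^l_{kj} P_{il}`. -/
def schoutenCov {m : ℕ} (g : (Fin m → ℝ) → Matrix (Fin m) (Fin m) ℝ)
    (i j k : Fin m) (x : Fin m → ℝ) : ℝ :=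
  pd k (fun y => schouten g i j y) x
    - ∑ l, christoffel g l k i x * schouten g l j x
    - ∑ l, christoffel g l k j x * schouten g i l x

/-- Cotton tensor `C_{ijk} = P_{ij,k} − P_{ik,j}`. -/
def cotton {m : ℕ} (g : (Fin m → ℝ) → Matrix (Fin m) (Fin m) ℝ)
    (i j k : Fin m) (x : Fin m → ℝ) : ℝ :=
  schoutenCov g i j k x - schoutenCov g i k j x

/-!
The metric is the product of the surface metric `ds² + f(s)² dt²` with a flat space, so its
curvature tensor is `K` times the square of the area form `dx^a ∧ dx^b`, with `K = -f f''`.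
Contracting such a tensor is pure algebra: each of the two directions contributes `K / (n - 1)` to the
Kulkarni–Nomizu term of the `abba` component, which leaves `(1 - 2 / (n - 1)) K`.
-/

section

open Topology Matrix

local notation "δ" => (1 : Matrix (Fin _) (Fin _) ℝ)

section PartialDerivatives

variable {n : ℕ} {x : Fin n → ℝ}

lemma pd_congr {F G : (Fin n → ℝ) → ℝ} (h : F =ᶠ[𝓝 x] G) (m : Fin n) : pd m F x = pd m G x := by
  rw [pd, pd, h.fderiv_eq]

lemma pd_comp_eval {a : Fin n} {h : ℝ → ℝ} {h' : ℝ} (hh : HasDerivAt h h' (x a)) (m : Fin n) :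
    pd m (fun y => h (y a)) x = δ a m * h' := by
  have hcomp := hh.comp_hasFDerivAt x (hasFDerivAt_apply (𝕜 := ℝ) a x)
  rw [Function.comp_def] at hcomp
  simp [pd, hcomp.fderiv, one_apply, Pi.single_apply, mul_comm]

end PartialDerivatives

section DiagonalMetric

variable {n : ℕ} {g : (Fin n → ℝ) → Matrix (Fin n) (Fin n) ℝ} {x : Fin n → ℝ} {d : Fin n → ℝ}

lemma inv_diagonal_of_ne_zero (hd : ∀ i, d i ≠ 0) : (diagonal d)⁻¹ = diagonal d⁻¹ :=
  inv_eq_left_inv <| by simp [diagonal_mul_diagonal, hd]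

lemma christoffel_of_diagonal (hg : g x = diagonal d) (hd : ∀ i, d i ≠ 0) (k i j : Fin n) :
    christoffel g k i j x = (1 / 2) * ((d k)⁻¹ *
      (pd i (fun y => g y j k) x + pd j (fun y => g y i k) x - pd k (fun y => g y i j) x)) := by
  simp [christoffel, hg, inv_diagonal_of_ne_zero hd, diagonal_apply]

lemma riemann_of_diagonal (hg : g x = diagonal d) (i j k l : Fin n) :
    riemann g i j k l x = d l * (pd i (christoffel g l j k) x - pd j (christoffel g l i k) x
      + ∑ p, (christoffel g l i p x * christoffel g p j k x
              - christoffel g l j p x * christoffel g p i k x)) := by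
  simp [riemann, hg, diagonal_apply]

lemma ricci_of_diagonal (hg : g x = diagonal d) (hd : ∀ i, d i ≠ 0) (j k : Fin n) :
    ricci g j k x = ∑ i, (d i)⁻¹ * riemann g i j k i x := by
  simp [ricci, hg, inv_diagonal_of_ne_zero hd, diagonal_apply]

lemma scalarCurv_of_diagonal (hg : g x = diagonal d) (hd : ∀ i, d i ≠ 0) :
    scalarCurv g x = ∑ j, (d j)⁻¹ * ricci g j j x := by
  simp [scalarCurv, hg, inv_diagonal_of_ne_zero hd, diagonal_apply]

end DiagonalMetric

section PlanarCurvature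

variable {n : ℕ} {a b : Fin n}

/-- The components `(dx^a ∧ dx^b)_{ij}` of a coordinate area form. -/
def coordWedge (a b i j : Fin n) : ℝ :=
  δ a i * δ b j - δ b i * δ a j

lemma coordWedge_eq_zero_of_ne {i : Fin n} (hi : i ≠ a ∧ i ≠ b) (j : Fin n) :
    coordWedge a b i j = 0 := by
  simp [coordWedge, hi.1.symm, hi.2.symm]

lemma coordWedge_left (hab : a ≠ b) (j : Fin n) : coordWedge a b a j = δ b j := by
  simp [coordWedge, hab.symm]

lemma coordWedge_right (hab : a ≠ b) (j : Fin n) : coordWedge a b b j = -δ a j := by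
  simp [coordWedge, hab]

/-- The curvature of `g` at `x` is `K` times the square of `dx^a ∧ dx^b`: only the plane spanned by
the two coordinate directions is curved. -/
def HasPlanarCurvature (g : (Fin n → ℝ) → Matrix (Fin n) (Fin n) ℝ) (a b : Fin n) (K : ℝ)
    (x : Fin n → ℝ) : Prop :=
  ∀ i j k l, riemann g i j k l x = K * (coordWedge a b i j * coordWedge a b l k)

namespace HasPlanarCurvature

variable {g : (Fin n → ℝ) → Matrix (Fin n) (Fin n) ℝ} {x : Fin n → ℝ} {d : Fin n → ℝ} {K : ℝ}

lemma ricci_eq (hR : HasPlanarCurvature g a b K x) (hab : a ≠ b) (hg : g x = diagonal d)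
    (hd : ∀ i, d i ≠ 0) (j k : Fin n) :
    ricci g j k x = K * (δ b j * δ b k / d a + δ a j * δ a k / d b) := by
  rw [ricci_of_diagonal hg hd, Fintype.sum_eq_add a b hab
    fun i hi => by simp [hR i j k i, coordWedge_eq_zero_of_ne hi]]
  rw [hR, hR, coordWedge_left hab, coordWedge_left hab, coordWedge_right hab, coordWedge_right hab]
  ring

lemma scalarCurv_eq (hR : HasPlanarCurvature g a b K x) (hab : a ≠ b) (hg : g x = diagonal d)
    (hd : ∀ i, d i ≠ 0) : scalarCurv g x = 2 * K / (d a * d b) := by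
  rw [scalarCurv_of_diagonal hg hd, Fintype.sum_eq_add a b hab
    fun i hi => by simp [hR.ricci_eq hab hg hd, hi.1.symm, hi.2.symm]]
  simp only [hR.ricci_eq hab hg hd, one_apply_eq, one_apply_ne hab, one_apply_ne hab.symm]
  field_simp
  ring

lemma schouten_left (hR : HasPlanarCurvature g a b K x) (hn : 3 ≤ n) (hab : a ≠ b)
    (hg : g x = diagonal d) (hd : ∀ i, d i ≠ 0) :
    schouten g a a x = K / ((n - 1) * d b) := by
  have hn' : (3 : ℝ) ≤ n := by exact_mod_cast hn
  have hn₁ : (n : ℝ) - 1 ≠ 0 := by linarith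
  have hn₂ : (n : ℝ) - 2 ≠ 0 := by linarith
  have ha := hd a
  have hb := hd b
  rw [schouten, hR.ricci_eq hab hg hd, hR.scalarCurv_eq hab hg hd, hg, diagonal_apply_eq,
    one_apply_eq, one_apply_ne hab.symm]
  field_simp
  ring

lemma symm (hR : HasPlanarCurvature g a b K x) : HasPlanarCurvature g b a K x := fun i j k l => by
  rw [hR, coordWedge, coordWedge, coordWedge, coordWedge]
  ring

theorem weyl_eq (hR : HasPlanarCurvature g a b K x) (hn : 3 ≤ n) (hab : a ≠ b)
    (hg : g x = diagonal d) (hd : ∀ i, d i ≠ 0) :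
    weyl g a b b a x = (n - 3) / (n - 1) * K := by
  have hn' : (3 : ℝ) ≤ n := by exact_mod_cast hn
  have hn₁ : (n : ℝ) - 1 ≠ 0 := by linarith
  have ha := hd a
  have hb := hd b
  have hriem : riemann g a b b a x = K := by simp [hR a b b a, coordWedge_left hab]
  rw [weyl, hriem, hR.schouten_left hn hab hg hd, hR.symm.schouten_left hn hab.symm hg hd, hg,
    diagonal_apply_eq, diagonal_apply_eq, diagonal_apply_ne _ hab, diagonal_apply_ne _ hab.symm]
  field_simp
  ring

end HasPlanarCurvature

end PlanarCurvature

section WarpedMetric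

variable {n : ℕ} {a b : Fin n} {f : ℝ → ℝ} {x : Fin n → ℝ}

/-- The metric `f(x^a)² (dx^b)² + ∑_{i ≠ b} (dx^i)²`, for a warping function `f` of the coordinate
`x^a`. -/
def warpedMetric (a b : Fin n) (f : ℝ → ℝ) (x : Fin n → ℝ) : Matrix (Fin n) (Fin n) ℝ :=
  diagonal fun i => if i = b then f (x a) ^ 2 else 1

lemma warpedMetric_apply (i j : Fin n) :
    warpedMetric a b f x i j = δ i j + δ b i * δ b j * (f (x a) ^ 2 - 1) := by
  rcases eq_or_ne i j with rfl | hij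
  · rcases eq_or_ne i b with rfl | hib
    · simp [warpedMetric]
    · simp [warpedMetric, hib, hib.symm]
  · rcases eq_or_ne i b with rfl | hib
    · simp [warpedMetric, hij]
    · simp [warpedMetric, hij, hib.symm]

lemma warpedMetric_diag_ne_zero (hfx : f (x a) ≠ 0) (i : Fin n) :
    (if i = b then f (x a) ^ 2 else 1) ≠ 0 := by
  split_ifs
  exacts [pow_ne_zero 2 hfx, one_ne_zero]

lemma pd_warpedMetric (hf : DifferentiableAt ℝ f (x a)) (m i j : Fin n) :
    pd m (fun y => warpedMetric a b f y i j) x =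
      δ a m * (δ b i * δ b j * (2 * f (x a) * deriv f (x a))) := by
  have hderiv : HasDerivAt (fun t => δ i j + δ b i * δ b j * (f t ^ 2 - 1))
      (δ b i * δ b j * (2 * f (x a) * deriv f (x a))) (x a) := by
    simpa using (((hf.hasDerivAt.pow 2).sub_const 1).const_mul (δ b i * δ b j)).const_add (δ i j)
  simpa only [warpedMetric_apply] using pd_comp_eval hderiv m

lemma christoffel_warpedMetric (hab : a ≠ b) (hf : DifferentiableAt ℝ f (x a)) (hfx : f (x a) ≠ 0)
    (k i j : Fin n) :
    christoffel (warpedMetric a b f) k i j x =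
      δ a k * δ b i * δ b j * -(f (x a) * deriv f (x a))
        + δ b k * (δ a i * δ b j + δ b i * δ a j) * (deriv f (x a) / f (x a)) := by
  rw [christoffel_of_diagonal (g := warpedMetric a b f) rfl (warpedMetric_diag_ne_zero hfx)]
  simp only [pd_warpedMetric hf]
  rcases eq_or_ne k b with rfl | hkb
  · rw [if_pos rfl, one_apply_eq, one_apply_ne hab]
    field_simp
    ring
  · rw [if_neg hkb, one_apply_ne hkb.symm]
    ring

lemma pd_christoffel_warpedMetric (hab : a ≠ b) (hf : ContDiffAt ℝ 2 f (x a)) (hfx : f (x a) ≠ 0)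
    (m k i j : Fin n) :
    pd m (christoffel (warpedMetric a b f) k i j) x = δ a m *
      (δ a k * δ b i * δ b j * -(deriv f (x a) * deriv f (x a) + f (x a) * deriv (deriv f) (x a))
        + δ b k * (δ a i * δ b j + δ b i * δ a j) *
          ((deriv (deriv f) (x a) * f (x a) - deriv f (x a) * deriv f (x a)) / f (x a) ^ 2)) := by
  have hformula : christoffel (warpedMetric a b f) k i j =ᶠ[𝓝 x] fun y =>
      δ a k * δ b i * δ b j * -(f (y a) * deriv f (y a))
        + δ b k * (δ a i * δ b j + δ b i * δ a j) * (deriv f (y a) / f (y a)) := by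
    have hnear : ∀ᶠ t in 𝓝 (x a), ContDiffAt ℝ 2 f t ∧ f t ≠ 0 :=
      (hf.eventually (by simp)).and (hf.continuousAt.eventually_ne hfx)
    filter_upwards [(continuous_apply a).continuousAt.eventually hnear] with y hy
    exact christoffel_warpedMetric hab (hy.1.differentiableAt (by simp)) hy.2 k i j
  have hf₁ : HasDerivAt f (deriv f (x a)) (x a) := (hf.differentiableAt (by simp)).hasDerivAt
  have hf₂ : HasDerivAt (deriv f) (deriv (deriv f) (x a)) (x a) :=
    ((hf.derivWithin (m := 1) (by norm_num)).differentiableAt (by simp)).hasDerivAt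
  rw [pd_congr hformula]
  exact pd_comp_eval (((hf₁.mul hf₂).neg.const_mul _).add ((hf₂.div hf₁ hfx).const_mul _)) m

theorem hasPlanarCurvature_warpedMetric (hab : a ≠ b) (hf : ContDiffAt ℝ 2 f (x a))
    (hfx : f (x a) ≠ 0) :
    HasPlanarCurvature (warpedMetric a b f) a b (-(f (x a) * deriv (deriv f) (x a))) x := by
  intro i j k l
  rw [riemann_of_diagonal (g := warpedMetric a b f) rfl]
  simp only [pd_christoffel_warpedMetric hab hf hfx,
    christoffel_warpedMetric hab (hf.differentiableAt (by simp)) hfx, coordWedge]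
  rw [Fintype.sum_eq_add a b hab fun p hp => by simp [hp.1.symm, hp.2.symm]]
  simp only [one_apply_eq, one_apply_ne hab, one_apply_ne hab.symm]
  rcases eq_or_ne l b with rfl | hlb
  · rw [if_pos rfl, one_apply_eq, one_apply_ne hab]
    field_simp
    ring
  · rw [if_neg hlb, one_apply_ne hlb.symm]
    field_simp
    ring

theorem stmt15_general (hn : 3 ≤ n) (hab : a ≠ b) (hf : ContDiffAt ℝ 2 f (x a))
    (hfx : f (x a) ≠ 0) :
    weyl (warpedMetric a b f) a b b a x
      = -(((n : ℝ) - 3) / ((n : ℝ) - 1)) * (f (x a) * deriv (deriv f) (x a)) := by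
  rw [(hasPlanarCurvature_warpedMetric hab hf hfx).weyl_eq hn hab rfl
    (warpedMetric_diag_ne_zero hfx)]
  ring

end WarpedMetric

end

/-- Let `n ≥ 3` and `f : ℝ → (0,∞)` of class `C³`. For the metric
`k = (dx¹)² + f(x¹)²(dx²)² + (dx³)² + ⋯ + (dxⁿ)²` on `{x ∈ ℝⁿ : x¹ > 0}`, the Weyl tensor
satisfies `W₁₂₂₁ = −((n−3)/(n−1)) f f''`. -/
theorem stmt15 (n : ℕ) (hn : 3 ≤ n) (f : ℝ → ℝ) (hfpos : ∀ t, 0 < f t) (hf : ContDiff ℝ 3 f)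
    (k : (Fin n → ℝ) → Matrix (Fin n) (Fin n) ℝ)
    (hk : ∀ x, k x = Matrix.diagonal (fun i =>
      if i = (⟨1, by omega⟩ : Fin n) then f (x ⟨0, by omega⟩) ^ 2 else 1)) :
    ∀ x : Fin n → ℝ, 0 < x ⟨0, by omega⟩ →
      weyl k ⟨0, by omega⟩ ⟨1, by omega⟩ ⟨1, by omega⟩ ⟨0, by omega⟩ x
        = -(((n : ℝ) - 3) / ((n : ℝ) - 1))
            * (f (x ⟨0, by omega⟩) * deriv (deriv f) (x ⟨0, by omega⟩)) := by
  intro x _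
  rw [show k = warpedMetric ⟨0, by omega⟩ ⟨1, by omega⟩ f from funext hk]
  exact stmt15_general hn (by simp) (hf.contDiffAt.of_le (by norm_num)) (hfpos _).ne'
end
end
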